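/- arXiv:1511.08929 — 3 statements merged into one kernel-verified Lean document; each statement's English description precedes it below -/
import Mathlib

section
/- Let T ∈ B(X) and let (t_{nj})_{n,j≥0} be nonnegative reals with Σ_{j≥0} t_{nj} = 1 for every n, such that T_n = Σ_{j≥0} t_{nj} T^j converges in operator norm for each n. Assume t_{n0} ≠ 1 and σ_n := Σ_{j≥1} j·t_{nj} < ∞ for every n, and σ_n → ∞ as n → ∞. For each n, k set s_{nk} = (Σ_{j≥k+1} t_{nj})/σ_n, and for λ ∈ ℂ with |λ| = 1 let T_{nλ} = Σ_{j≥0} t_{nj} λ^j T^j and T_{nλ}^{(−1)} = Σ_{k≥0} s_{nk} λ^k T^k. Suppose (w_n) is an increasing sequence of positive reals with ‖T_{nλ}‖ + ‖T_{nλ}^{(−1)}‖ ≤ w_n for all n and all |λ| = 1, and that σ(T) ∩ 𝕋 has one-dimensional Hausdorff measure zero. Then for every strictly increasing sequence (m_n) of positive integers, (‖T^n‖ · s_{m_n,n}) / w_{m_n} → 0 as n → ∞. -/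
open Filter Topology MeasureTheory

lemma aux_null (A : Set ℂ)
    (hA : (MeasureTheory.Measure.hausdorffMeasure 1 : Measure ℂ) A = 0) :
    volume ({θ : ℝ | (Complex.exp (θ * Complex.I))⁻¹ ∈ A} ∩ Set.Ioc (-Real.pi) Real.pi) = 0 := by
  set N : Set ℝ := Set.image Complex.re A with hN
  have hN0 : volume N = 0 := by
    rw [← MeasureTheory.hausdorffMeasure_real]
    have hl : LipschitzWith 1 Complex.re := by
      refine LipschitzWith.of_dist_le_mul fun x y => ?_
      rw [Real.dist_eq, dist_eq_norm, ← Complex.sub_re]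
      simpa using Complex.abs_re_le_norm (x - y)
    have := hl.hausdorffMeasure_image_le (d := 1) (by norm_num) A
    rw [hA] at this
    simpa using this
  set M : Set ℝ := N \ {1, -1}
  have hM0 : volume M = 0 := measure_mono_null Set.sdiff_subset hN0
  have hB : volume (Set.image Real.arccos M) = 0 := by
    apply MeasureTheory.addHaar_image_eq_zero_of_differentiableOn_of_addHaar_eq_zero _ _ hM0
    intro x hx
    have h1 : x ≠ 1 := fun h => hx.2 (by simp [h])
    have h2 : x ≠ -1 := fun h => hx.2 (by simp [h])
    exact (Real.differentiableAt_arccos.2 ⟨h2, h1⟩).differentiableWithinAt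
  have hB' : volume (Set.image Neg.neg (Set.image Real.arccos M)) = 0 := by
    apply MeasureTheory.addHaar_image_eq_zero_of_differentiableOn_of_addHaar_eq_zero _ _ hB
    exact differentiable_neg.differentiableOn
  have hF : volume ({-Real.pi, 0, Real.pi} : Set ℝ) = 0 :=
    (Set.toFinite _).measure_zero _
  refine measure_mono_null ?_ (measure_union_null (measure_union_null hB hB') hF)
  rintro θ ⟨hθ, h1, h2⟩
  by_cases hf : θ ∈ ({-Real.pi, 0, Real.pi} : Set ℝ)
  · exact Or.inr hf
  left
  have hcos : Real.cos θ ∈ N := by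
    refine ⟨_, hθ, ?_⟩
    rw [← Complex.exp_neg, ← neg_mul, ← Complex.ofReal_neg, Complex.exp_ofReal_mul_I_re,
      Real.cos_neg]
  simp only [Set.mem_insert_iff, Set.mem_singleton_iff, not_or] at hf
  obtain ⟨hf1, hf2, hf3⟩ := hf
  have hs : Real.sin θ ≠ 0 := by
    intro h
    rw [Real.sin_eq_zero_iff_of_lt_of_lt h1 (lt_of_le_of_ne h2 hf3)] at h
    exact hf2 h
  have hcM : Real.cos θ ∈ M := by
    refine ⟨hcos, ?_⟩
    intro h
    apply hs
    have := Real.sin_sq_add_cos_sq θ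
    have h' : Real.cos θ ^ 2 = 1 := by
      rcases h with h | h
      · rw [h]; norm_num
      · rw [Set.mem_singleton_iff.1 h]; norm_num
    rw [h'] at this
    exact pow_eq_zero_iff (two_ne_zero) |>.1 (by linarith)
  rcases le_total 0 θ with h0 | h0
  · left
    exact ⟨_, hcM, Real.arccos_cos h0 h2⟩
  · right
    refine ⟨_, ⟨_, hcM, rfl⟩, ?_⟩
    rw [← Real.cos_neg, Real.arccos_cos (by linarith) (by linarith), neg_neg]

lemma aux_orth (j k : ℕ) :
    ∫ θ in (-Real.pi)..Real.pi, Complex.exp (θ * Complex.I) ^ j * (Complex.exp (θ * Complex.I))⁻¹ ^ k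
      = if j = k then (2 * Real.pi : ℂ) else 0 := by
  have h (θ : ℝ) : Complex.exp (θ * Complex.I) ^ j * (Complex.exp (θ * Complex.I))⁻¹ ^ k
      = Complex.exp ((((j : ℂ) - k) * Complex.I) * θ) := by
    rw [← Complex.exp_neg, ← Complex.exp_nat_mul, ← Complex.exp_nat_mul, ← Complex.exp_add]
    congr 1; ring
  simp_rw [h]
  split_ifs with hjk
  · subst hjk
    simp; ring
  · have hc : ((j : ℂ) - k) * Complex.I ≠ 0 := by
      refine mul_ne_zero (sub_ne_zero.2 (by exact_mod_cast hjk)) Complex.I_ne_zero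
    rw [integral_exp_mul_complex hc]
    rw [div_eq_zero_iff]; left
    rw [sub_eq_zero, Complex.exp_eq_exp_iff_exists_int]
    refine ⟨(j : ℤ) - k, ?_⟩
    push_cast; ring

lemma aux_coeff (a : ℕ → ℂ) (ha : Summable fun j => ‖a j‖) (f : ℝ → ℂ)
    (hf : ∀ θ : ℝ, HasSum (fun j => a j * Complex.exp (θ * Complex.I) ^ j) (f θ)) (k : ℕ) :
    ∫ θ in (-Real.pi)..Real.pi, f θ * (Complex.exp (θ * Complex.I))⁻¹ ^ k
      = 2 * Real.pi * a k := by
  have hnorm (θ : ℝ) : ‖Complex.exp (θ * Complex.I)‖ = 1 := Complex.norm_exp_ofReal_mul_I θ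
  have h1 := intervalIntegral.hasSum_integral_of_dominated_convergence
    (μ := volume) (a := -Real.pi) (b := Real.pi)
    (F := fun j (θ : ℝ) => a j * Complex.exp (θ * Complex.I) ^ j
      * (Complex.exp (θ * Complex.I))⁻¹ ^ k)
    (f := fun θ => f θ * (Complex.exp (θ * Complex.I))⁻¹ ^ k)
    (fun j _ => ‖a j‖) ?_ ?_ ?_ ?_ ?_
  · have h2 (j : ℕ) : ∫ θ in (-Real.pi)..Real.pi, a j * Complex.exp (θ * Complex.I) ^ j
      * (Complex.exp (θ * Complex.I))⁻¹ ^ k = if j = k then 2 * Real.pi * a k else 0 := by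
      simp_rw [mul_assoc (a j)]
      rw [intervalIntegral.integral_const_mul, aux_orth]
      split_ifs with h
      · rw [h]; ring
      · simp
    simp_rw [h2] at h1
    exact h1.unique (hasSum_ite_eq k _)
  · intro j
    apply Continuous.aestronglyMeasurable
    have : ∀ θ : ℝ, Complex.exp (θ * Complex.I) ≠ 0 := fun θ => Complex.exp_ne_zero _
    fun_prop (disch := assumption)
  · intro j
    refine ae_of_all _ fun θ _ => ?_
    simp [hnorm]
  · exact ae_of_all _ fun θ _ => ha
  · exact intervalIntegrable_const
  · exact ae_of_all _ fun θ _ => (hf θ).mul_right _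

lemma aux_ident {A : Type*} [NormedRing A] [NormedAlgebra ℂ A] (T : A) (t s : ℕ → ℝ) (sig : ℝ)
    (ht_sum : HasSum t 1)
    (hs : ∀ k, s k = (∑' j : ℕ, if k < j then t j else 0) / sig) (lam : ℂ) (Y Z : A)
    (hZ : HasSum (fun j => ((t j : ℂ) * lam ^ j) • T ^ j) Z)
    (hY : HasSum (fun k => ((s k : ℂ) * lam ^ k) • T ^ k) Y) :
    (lam • T) * Y - Y = ((sig : ℂ)⁻¹) • (Z - 1) := by
  have hsm (k : ℕ) : Summable (fun j => if k < j then t j else 0) := by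
    have := ht_sum.summable.indicator {j | k < j}
    refine this.congr fun j => ?_
    simp [Set.indicator_apply]
  have hs0 : s 0 = (1 - t 0) / sig := by
    rw [hs]; congr 1
    rw [(hsm 0).tsum_eq_zero_add, ← ht_sum.tsum_eq, ht_sum.summable.tsum_eq_zero_add]
    simp
  have hsd (k : ℕ) : s k - s (k + 1) = t (k + 1) / sig := by
    rw [hs, hs, ← sub_div, ← (hsm k).tsum_sub (hsm (k + 1)), tsum_eq_single (k + 1)]
    · simp
    · intro j hj
      by_cases h1 : k + 1 < j
      · have : k < j := by omega
        simp [h1, this]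
      · have : ¬ k < j := by omega
        simp [h1, this]
  have h1 := hY.mul_left (lam • T)
  have h2 := (hasSum_nat_add_iff' 1).2 hY
  have h3 := h1.sub h2
  have h4 := ((hasSum_nat_add_iff' 1).2 hZ).const_smul ((sig : ℂ)⁻¹)
  have h5 := h3.unique (h4.congr_fun ?_)
  · simp only [Finset.range_one, Finset.sum_singleton, pow_zero, mul_one] at h5
    have h6 : ((s 0 : ℝ) : ℂ) = (sig : ℂ)⁻¹ - (sig : ℂ)⁻¹ * t 0 := by
      rw [hs0]; push_cast; ring
    rw [h6] at h5
    rw [smul_sub, smul_smul, sub_smul] at h5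
    rw [smul_sub, ← sub_eq_zero]
    rw [← sub_eq_zero] at h5
    rw [← h5]; abel
  · intro k
    have h7 : ((t (k + 1) : ℝ) : ℂ) * (sig : ℂ)⁻¹ = s k - s (k + 1) := by
      rw [← div_eq_mul_inv]; exact_mod_cast (hsd k).symm
    simp only [smul_mul_smul_comm, smul_smul, ← pow_succ', ← sub_smul]
    congr 1
    linear_combination (- lam ^ (k + 1)) * h7

/-- Generalized Nevanlinna theorem: if {T_n} ⊆ κ(T) has coefficients t_{nj} with
t_{n0} ≠ 1, σ_n = Σ_j j t_{nj} < ∞, σ_n → ∞, and the rotated means T_{nλ} together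
with their backward iterates T_{nλ}^{(−1)} satisfy ‖T_{nλ}‖ + ‖T_{nλ}^{(−1)}‖ ≤ w_n
for all |λ| = 1, and the peripheral spectrum σ(T) ∩ 𝕋 has one-dimensional Hausdorff
measure zero, then for every strictly increasing sequence (m_n) of positive integers,
‖T^n‖ · s_{m_n n} / w_{m_n} → 0, where s_{nk} = (Σ_{j≥k+1} t_{nj}) / σ_n. -/
theorem stmt12 {X : Type*} [NormedAddCommGroup X] [NormedSpace ℂ X] [CompleteSpace X]
    (T : X →L[ℂ] X)
    (t : ℕ → ℕ → ℝ)
    (ht_nonneg : ∀ n j, 0 ≤ t n j)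
    (ht_sum : ∀ n, HasSum (t n) 1)
    (Tn : ℕ → X →L[ℂ] X)
    (hTn : ∀ n, HasSum (fun j : ℕ => t n j • T ^ j) (Tn n))
    (ht0 : ∀ n, t n 0 ≠ 1)
    (sig : ℕ → ℝ)
    (hsig : ∀ n, HasSum (fun j : ℕ => (j : ℝ) * t n j) (sig n))
    (hsig_top : Tendsto sig atTop atTop)
    (s : ℕ → ℕ → ℝ)
    (hs : ∀ n k, s n k = (∑' j : ℕ, if k < j then t n j else 0) / sig n)
    (Tlam Tlaminv : ℕ → ℂ → X →L[ℂ] X)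
    (hTlam : ∀ n (lam : ℂ), ‖lam‖ = 1 →
      HasSum (fun j => ((t n j : ℂ) * lam ^ j) • T ^ j) (Tlam n lam))
    (hTlaminv : ∀ n (lam : ℂ), ‖lam‖ = 1 →
      HasSum (fun k => ((s n k : ℂ) * lam ^ k) • T ^ k) (Tlaminv n lam))
    (w : ℕ → ℝ) (hw_mono : Monotone w) (hw_pos : ∀ n, 0 < w n)
    (hbound : ∀ n (lam : ℂ), ‖lam‖ = 1 → ‖Tlam n lam‖ + ‖Tlaminv n lam‖ ≤ w n)
    (hspec : (MeasureTheory.Measure.hausdorffMeasure 1 : Measure ℂ)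
      (spectrum ℂ T ∩ Metric.sphere (0 : ℂ) 1) = 0) :
    ∀ mseq : ℕ → ℕ, StrictMono mseq → (∀ n, 0 < mseq n) →
      Tendsto (fun n => ‖T ^ n‖ * s (mseq n) n / w (mseq n)) atTop (𝓝 0) := by
  classical
  set E : ℝ → ℂ := fun θ => Complex.exp (θ * Complex.I) with hE
  have hEn (θ : ℝ) : ‖E θ‖ = 1 := Complex.norm_exp_ofReal_mul_I θ
  have hEc : Continuous E := by fun_prop
  -- measurability of the backward iterates
  have hmeas (n : ℕ) : StronglyMeasurable (fun θ : ℝ => Tlaminv n (E θ)) := by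
    refine stronglyMeasurable_of_tendsto (u := atTop)
      (f := fun N (θ : ℝ) => ∑ k ∈ Finset.range N, ((s n k : ℂ) * E θ ^ k) • T ^ k) ?_ ?_
    · intro N
      apply Continuous.stronglyMeasurable
      fun_prop
    · rw [tendsto_pi_nhds]
      intro θ
      exact (hTlaminv n (E θ) (hEn θ)).tendsto_sum_nat
  have hle (n : ℕ) (θ : ℝ) : ‖Tlaminv n (E θ)‖ ≤ w n := by
    have := hbound n (E θ) (hEn θ)
    have := norm_nonneg (Tlam n (E θ))
    linarith
  have hpi : -Real.pi ≤ Real.pi := by linarith [Real.pi_pos]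
  have hint (n : ℕ) : IntervalIntegrable (fun θ => ‖Tlaminv n (E θ)‖) volume
      (-Real.pi) Real.pi := by
    refine (intervalIntegrable_const (c := w n)).mono_fun (hmeas n).norm.aestronglyMeasurable ?_
    refine ae_of_all _ fun θ => ?_
    simp only [norm_norm]
    exact (hle n θ).trans (le_abs_self _)
  -- Fourier coefficient bound
  have hcoef (n k : ℕ) : 2 * Real.pi * (|s n k| * ‖T ^ k‖) ≤
      ∫ θ in (-Real.pi)..Real.pi, ‖Tlaminv n (E θ)‖ := by
    obtain ⟨φ, hφ1, hφ2⟩ := exists_dual_vector'' ℂ (T ^ k)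
    have hsum (θ : ℝ) : HasSum (fun j => ((s n j : ℂ) * φ (T ^ j)) * E θ ^ j)
        (φ (Tlaminv n (E θ))) := by
      have := (hTlaminv n (E θ) (hEn θ)).mapL φ
      refine this.congr_fun fun j => ?_
      simp only [map_smul, smul_eq_mul]
      ring
    have habs : Summable fun j => ‖(s n j : ℂ) * φ (T ^ j)‖ := by
      have := (hsum 0).summable.norm
      simpa [hEn] using this
    have h := aux_coeff _ habs _ hsum k
    have h1 : ‖(2 * Real.pi : ℂ) * ((s n k : ℂ) * φ (T ^ k))‖
        = 2 * Real.pi * (|s n k| * ‖T ^ k‖) := by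
      rw [hφ2]
      simp [abs_of_pos Real.pi_pos]
    rw [← h1, ← h]
    refine intervalIntegral.norm_integral_le_of_norm_le hpi ?_ (hint n)
    refine ae_of_all _ fun θ _ => ?_
    rw [norm_mul, norm_pow, norm_inv]
    have : ‖Complex.exp (θ * Complex.I)‖ = 1 := hEn θ
    rw [this]
    simp only [inv_one, one_pow, mul_one]
    calc ‖φ (Tlaminv n (E θ))‖ ≤ ‖φ‖ * ‖Tlaminv n (E θ)‖ := φ.le_opNorm _
      _ ≤ 1 * ‖Tlaminv n (E θ)‖ := by gcongr
      _ = _ := one_mul _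
  -- pointwise convergence off the spectrum
  have hpt (θ : ℝ) (hθ : (E θ)⁻¹ ∉ spectrum ℂ T) :
      Tendsto (fun n => ‖Tlaminv n (E θ)‖ / w n) atTop (𝓝 0) := by
    have hE0 : E θ ≠ 0 := Complex.exp_ne_zero _
    rw [spectrum.notMem_iff] at hθ
    obtain ⟨u, hu⟩ := hθ
    set R : X →L[ℂ] X := ↑u⁻¹ with hR
    set C : ℝ := ‖R‖ * (‖(1 : X →L[ℂ] X)‖ / w 0 + 1) with hC
    have hb (n : ℕ) : ‖Tlaminv n (E θ)‖ / w n ≤ C * |(sig n)⁻¹| := by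
      have h1 := aux_ident T (t n) (s n) (sig n) (ht_sum n) (hs n) (E θ) _ _
        (hTlam n _ (hEn θ)) (hTlaminv n _ (hEn θ))
      have h2 : (u : X →L[ℂ] X) * Tlaminv n (E θ)
          = ((E θ)⁻¹ * (sig n : ℂ)⁻¹) • (1 - Tlam n (E θ)) := by
        have h3 : (u : X →L[ℂ] X) * Tlaminv n (E θ)
            = -((E θ)⁻¹ • ((E θ • T) * Tlaminv n (E θ) - Tlaminv n (E θ))) := by
          rw [hu, sub_mul, Algebra.algebraMap_eq_smul_one, smul_mul_assoc, one_mul, smul_sub,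
            smul_mul_assoc, inv_smul_smul₀ hE0]
          abel
        rw [h3, h1, smul_smul, ← smul_neg, neg_sub]
      have h4 : Tlaminv n (E θ) = R * (((E θ)⁻¹ * (sig n : ℂ)⁻¹) • (1 - Tlam n (E θ))) := by
        rw [← h2, hR, Units.inv_mul_cancel_left]
      have h5 : ‖Tlam n (E θ)‖ ≤ w n := by
        have := hbound n (E θ) (hEn θ)
        have := norm_nonneg (Tlaminv n (E θ))
        linarith
      have h6 : ‖Tlaminv n (E θ)‖ ≤ ‖R‖ * (|(sig n)⁻¹| * (‖(1 : X →L[ℂ] X)‖ + w n)) := by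
        conv_lhs => rw [h4]
        refine (norm_mul_le _ _).trans ?_
        gcongr
        rw [norm_smul, norm_mul, norm_inv, hEn, inv_one, one_mul, ← Complex.ofReal_inv,
          Complex.norm_real, Real.norm_eq_abs]
        gcongr
        exact (norm_sub_le _ _).trans (by gcongr)
      rw [div_le_iff₀ (hw_pos n)]
      refine h6.trans ?_
      have h7 : ‖(1 : X →L[ℂ] X)‖ ≤ ‖(1 : X →L[ℂ] X)‖ / w 0 * w n := by
        rw [div_mul_eq_mul_div, le_div_iff₀ (hw_pos 0)]
        gcongr
        exact hw_mono (Nat.zero_le n)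
      calc ‖R‖ * (|(sig n)⁻¹| * (‖(1 : X →L[ℂ] X)‖ + w n))
          ≤ ‖R‖ * (|(sig n)⁻¹| * (‖(1 : X →L[ℂ] X)‖ / w 0 * w n + w n)) := by gcongr
        _ = C * |(sig n)⁻¹| * w n := by rw [hC]; ring
    refine squeeze_zero (fun n => div_nonneg (norm_nonneg _) (hw_pos n).le) hb ?_
    have := (hsig_top.inv_tendsto_atTop).abs.const_mul C
    simpa using this
  -- dominated convergence
  have hI : Tendsto (fun n => ∫ θ in (-Real.pi)..Real.pi, ‖Tlaminv n (E θ)‖ / w n) atTop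
      (𝓝 0) := by
    have := intervalIntegral.tendsto_integral_filter_of_dominated_convergence
      (μ := volume) (a := -Real.pi) (b := Real.pi) (l := atTop)
      (F := fun n θ => ‖Tlaminv n (E θ)‖ / w n) (f := fun _ => (0 : ℝ)) (fun _ => (1 : ℝ))
      ?_ ?_ ?_ ?_
    · simpa using this
    · refine Eventually.of_forall fun n => ?_
      simp_rw [div_eq_mul_inv]
      exact ((hmeas n).norm.mul_const _).aestronglyMeasurable
    · refine Eventually.of_forall fun n => ae_of_all _ fun θ _ => ?_
      rw [Real.norm_of_nonneg (div_nonneg (norm_nonneg _) (hw_pos n).le)]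
      exact (div_le_one (hw_pos n)).2 (hle n θ)
    · exact intervalIntegrable_const
    · have hnull := aux_null _ hspec
      rw [Set.uIoc_of_le hpi]
      rw [measure_eq_zero_iff_ae_notMem] at hnull
      filter_upwards [hnull] with θ hθ hθ'
      apply hpt
      intro hmem
      refine hθ ⟨⟨hmem, ?_⟩, hθ'⟩
      rw [mem_sphere_zero_iff_norm, norm_inv]
      have : ‖Complex.exp (θ * Complex.I)‖ = 1 := hEn θ
      rw [this, inv_one]
  intro mseq hm _
  have hI2 := (hI.comp hm.tendsto_atTop).const_mul ((2 * Real.pi)⁻¹)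
  rw [mul_zero] at hI2
  refine squeeze_zero_norm (fun n => ?_) hI2
  have h2pi : 0 < 2 * Real.pi := by positivity
  simp only [Function.comp_apply]
  rw [intervalIntegral.integral_div, norm_div, norm_mul, norm_norm, Real.norm_eq_abs,
    Real.norm_of_nonneg (hw_pos _).le, ← mul_div_assoc]
  refine div_le_div_of_nonneg_right ?_ (hw_pos _).le
  rw [le_inv_mul_iff₀ h2pi, mul_comm ‖T ^ n‖]
  exact hcoef _ _
end

section
/- Let p ≥ 2 be an integer, r ≥ 0 a real number, and T ∈ B(X). Then sup over all integers n ≥ 1 and all λ ∈ ℂ with |λ| = 1 of n^{−r} ‖M_n^{(p)}(λT)‖ is finite if and only if for every λ ∈ ℂ with |λ| > 1 the operator T − λI is invertible and sup_{|λ|>1} ((|λ|−1)^{r+1}/|λ|^r) · ‖(T − λI)^{−1}‖ < ∞. -/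
open Filter Topology

/-- The Cesàro mean of order p of an operator S:
M_n^{(p)}(S) = (p/((n+1)⋯(n+p))) Σ_{j=0}^n ((n−j+p−1)!/(n−j)!) S^j. -/
noncomputable def cesaroMean {X : Type*} [NormedAddCommGroup X] [NormedSpace ℂ X]
    (p : ℕ) (S : X →L[ℂ] X) (n : ℕ) : X →L[ℂ] X :=
  ((p : ℂ) / ∏ i ∈ Finset.range p, ((n : ℂ) + 1 + i)) •
    ∑ j ∈ Finset.range (n + 1),
      (((n - j + p - 1).factorial : ℂ) / ((n - j).factorial : ℂ)) • S ^ j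

section Aux
set_option linter.unusedSectionVars false
variable {A : Type*} [NormedRing A] [NormedAlgebra ℂ A]

/-- iterated partial sums of the powers of S -/
noncomputable def csig (S : A) : ℕ → ℕ → A
  | 0, n => S ^ n
  | p + 1, n => ∑ k ∈ Finset.range (n + 1), csig S p k

lemma csig_succ_succ (S : A) (p n : ℕ) :
    csig S (p + 1) (n + 1) = csig S (p + 1) n + csig S p (n + 1) := by
  simp only [csig]
  rw [Finset.sum_range_succ]

lemma csig_zero_right (S : A) (p : ℕ) : csig S p 0 = 1 := by
  induction p with
  | zero => simp [csig]
  | succ p ih => simp [csig, ih]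

lemma csig_closed (S : A) (p n : ℕ) : csig S (p + 1) n =
    ∑ j ∈ Finset.range (n + 1), ((n - j + p).choose p : ℂ) • S ^ j := by
  induction p generalizing n with
  | zero => simp [csig]
  | succ p ihp =>
    induction n with
    | zero => simp [csig_zero_right]
    | succ n ihn =>
      rw [csig_succ_succ, ihn, ihp, Finset.sum_range_succ _ (n + 1),
        Finset.sum_range_succ _ (n + 1), ← add_assoc, ← Finset.sum_add_distrib]
      congr 1
      · refine Finset.sum_congr rfl fun j hj => ?_
        have hj' : j ≤ n := by simpa [Nat.lt_succ_iff] using hj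
        rw [← add_smul]
        congr 1
        have e1 : n + 1 - j = n - j + 1 := by omega
        rw [e1]
        have e2 : n - j + 1 + (p + 1) = (n - j + 1 + p) + 1 := by omega
        rw [e2, Nat.choose_succ_succ]
        have e3 : n - j + (p + 1) = n - j + 1 + p := by omega
        rw [e3]
        push_cast
        ring
      · simp

lemma csig_hasSum_step (S : A) (p : ℕ) (z : ℂ) (F : A)
    (h : HasSum (fun n => z ^ n • csig S (p + 1) n) F) :
    HasSum (fun n => z ^ n • csig S p n) ((1 - z) • F) := by
  rw [← hasSum_nat_add_iff' 1]
  have h1 := (hasSum_nat_add_iff' 1).2 h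
  have h2 := h.const_smul z
  have h3 := h1.sub h2
  convert h3 using 1
  · funext n
    rw [csig_succ_succ, smul_smul, ← pow_succ', ← smul_sub]
    simp
  · simp [csig_zero_right, sub_smul]
    abel

lemma csig_hasSum_pow (S : A) (p : ℕ) (z : ℂ) (F : A)
    (h : HasSum (fun n => z ^ n • csig S p n) F) :
    HasSum (fun n => (z • S) ^ n) ((1 - z) ^ p • F) := by
  induction p generalizing F with
  | zero => simpa [csig, smul_pow] using h
  | succ p ih =>
    have := ih _ (csig_hasSum_step S p z F h)
    rwa [smul_smul, ← pow_succ] at this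

lemma csig_hasSum_inv (S : A) (p : ℕ) (z : ℂ) (F : A)
    (h : HasSum (fun n => z ^ n • csig S p n) F) :
    (1 - z • S) * ((1 - z) ^ p • F) = 1 ∧ ((1 - z) ^ p • F) * (1 - z • S) = 1 := by
  have h1 := csig_hasSum_pow S p z F h
  rw [← h1.tsum_eq]
  exact ⟨h1.summable.one_sub_mul_tsum_pow, h1.summable.tsum_pow_mul_one_sub⟩

lemma csig_crude (h1 : ‖(1 : A)‖ ≤ 1) (S : A) (p n : ℕ) :
    ‖csig S p n‖ ≤ 2 ^ p * (2 + ‖S‖) ^ n := by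
  have hM : 0 ≤ ‖S‖ := norm_nonneg S
  induction p generalizing n with
  | zero =>
    simp only [csig, pow_zero, one_mul]
    rcases Nat.eq_zero_or_pos n with rfl | hn
    · simpa using h1
    · exact (norm_pow_le' S hn).trans (pow_le_pow_left₀ hM (by linarith) n)
  | succ p ih =>
    induction n with
    | zero =>
      rw [csig_zero_right]
      have : (1 : ℝ) ≤ 2 ^ (p + 1) := one_le_pow₀ (by norm_num)
      simpa using h1.trans this
    | succ n ihn =>
      rw [csig_succ_succ]
      have hX : 0 ≤ (2 + ‖S‖) ^ n := by positivity
      have hP : (0 : ℝ) ≤ 2 ^ p := by positivity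
      calc _ ≤ 2 ^ (p + 1) * (2 + ‖S‖) ^ n + 2 ^ p * (2 + ‖S‖) ^ (n + 1) :=
            (norm_add_le _ _).trans (add_le_add ihn (ih _))
        _ ≤ _ := by
          have : 0 ≤ 2 ^ p * (2 + ‖S‖) ^ n * ‖S‖ := by positivity
          ring_nf at this ⊢
          nlinarith

lemma geom_bound (a : ℝ) (ha : 0 ≤ a) : ∃ K : ℝ, 0 ≤ K ∧ ∀ t : ℝ, 0 ≤ t → t < 1 →
    Summable (fun n : ℕ => ((n : ℝ) + 1) ^ a * t ^ n) ∧
    ∑' n : ℕ, ((n : ℝ) + 1) ^ a * t ^ n ≤ K * (1 - t) ^ (-(a + 1)) := by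
  obtain ⟨m, hm⟩ := exists_nat_ge a
  have key : ∀ x : ℝ, 0 < x → x ^ a * Real.exp (-x) ≤ 1 + m.factorial := by
    intro x hx
    have hf : (0 : ℝ) < m.factorial := by exact_mod_cast Nat.factorial_pos m
    have h2 : x ^ m ≤ m.factorial * Real.exp x := by
      have := Real.pow_div_factorial_le_exp x hx.le m
      rw [div_le_iff₀ hf] at this
      linarith
    have h3 : x ^ a ≤ 1 + x ^ m := by
      rcases le_total x 1 with h | h
      · have := Real.rpow_le_one hx.le h ha
        have : 0 ≤ x ^ m := by positivity
        linarith
      · have := Real.rpow_le_rpow_of_exponent_le h hm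
        rw [Real.rpow_natCast] at this
        linarith
    have h4 : (1 : ℝ) ≤ Real.exp x := Real.one_le_exp hx.le
    rw [Real.exp_neg, ← div_eq_mul_inv, div_le_iff₀ (Real.exp_pos x)]
    nlinarith
  set L : ℝ := (1 + m.factorial) * Real.exp 1 with hL
  have hL0 : 0 ≤ L := by positivity
  refine ⟨L * 2 ^ (a + 1), by positivity, fun t ht0 ht1 => ?_⟩
  set s := Real.sqrt t with hs
  have hs0 : 0 ≤ s := Real.sqrt_nonneg t
  have hss : s * s = t := Real.mul_self_sqrt ht0
  have hs1 : s < 1 := by nlinarith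
  have hst : (1 - t) / 2 ≤ 1 - s := by nlinarith
  have hd : 0 < 1 - s := by linarith
  have term : ∀ n : ℕ, ((n : ℝ) + 1) ^ a * t ^ n ≤ (L * (1 - s) ^ (-a)) * s ^ n := by
    intro n
    have e1 : s ^ n ≤ Real.exp 1 * Real.exp (-((1 - s) * (n + 1))) := by
      rw [← Real.exp_add]
      have : s ≤ Real.exp (-(1 - s)) := by
        have := Real.add_one_le_exp (-(1 - s)); linarith
      calc s ^ n ≤ Real.exp (-(1 - s)) ^ n := pow_le_pow_left₀ hs0 this n
        _ = Real.exp (n * (-(1 - s))) := (Real.exp_nat_mul _ n).symm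
        _ ≤ _ := by
          apply Real.exp_le_exp.2
          nlinarith
    have e2 := key ((1 - s) * (n + 1)) (by positivity)
    rw [Real.mul_rpow hd.le (by positivity)] at e2
    have e3 : ((n : ℝ) + 1) ^ a * s ^ n ≤ L * (1 - s) ^ (-a) := by
      rw [Real.rpow_neg hd.le, ← div_eq_mul_inv, le_div_iff₀ (by positivity)]
      calc ((n : ℝ) + 1) ^ a * s ^ n * (1 - s) ^ a
          ≤ ((n : ℝ) + 1) ^ a * (Real.exp 1 * Real.exp (-((1 - s) * (n + 1)))) * (1 - s) ^ a := by
            gcongr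
        _ = Real.exp 1 * ((1 - s) ^ a * ((n : ℝ) + 1) ^ a * Real.exp (-((1 - s) * (n + 1)))) := by
            ring
        _ ≤ Real.exp 1 * (1 + m.factorial) := by gcongr
        _ = L := by rw [hL]; ring
    calc ((n : ℝ) + 1) ^ a * t ^ n = ((n : ℝ) + 1) ^ a * s ^ n * s ^ n := by
          rw [← hss, mul_pow]; ring
      _ ≤ _ := by gcongr
  have hg : HasSum (fun n : ℕ => (L * (1 - s) ^ (-a)) * s ^ n) ((L * (1 - s) ^ (-a)) * (1 - s)⁻¹) :=
    (hasSum_geometric_of_lt_one hs0 hs1).mul_left _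
  have hsum : Summable (fun n : ℕ => ((n : ℝ) + 1) ^ a * t ^ n) :=
    Summable.of_nonneg_of_le (fun n => by positivity) term hg.summable
  refine ⟨hsum, ?_⟩
  have h1 : 0 < 1 - t := by linarith
  calc _ ≤ ∑' n : ℕ, (L * (1 - s) ^ (-a)) * s ^ n := hsum.tsum_le_tsum term hg.summable
    _ = L * (1 - s) ^ (-(a + 1)) := by
      rw [hg.tsum_eq, mul_assoc, ← Real.rpow_neg_one, ← Real.rpow_add hd]
      congr 2; ring
    _ ≤ L * ((1 - t) / 2) ^ (-(a + 1)) := by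
      gcongr L * ?_
      exact Real.rpow_le_rpow_of_nonpos (by positivity) hst (by linarith)
    _ = _ := by
      rw [Real.div_rpow h1.le (by norm_num), Real.rpow_neg (by norm_num : (0:ℝ) ≤ 2)]
      field_simp

lemma poisson_avg (ρ : ℝ) (h0 : 0 < ρ) (h1 : ρ < 1) :
    (2 * Real.pi)⁻¹ * ∫ θ in (0 : ℝ)..2 * Real.pi, (‖1 - circleMap 0 ρ θ‖ ^ 2)⁻¹
      = (1 - ρ ^ 2)⁻¹ := by
  have hw : ((ρ ^ 2 : ℝ) : ℂ) ∈ Metric.ball (0 : ℂ) ρ := by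
    simp
    nlinarith
  have h := InnerProductSpace.HarmonicOnNhd.circleAverage_poissonKernel_smul (f := fun _ : ℂ => (1 : ℝ)) (w := ((ρ ^ 2 : ℝ) : ℂ)) (c := 0) (R := ρ) 
    (fun x hx => InnerProductSpace.harmonicAt_const (1 : ℝ)) hw
  rw [Real.circleAverage_def] at h
  have h12 : 0 < 1 - ρ ^ 2 := by nlinarith
  have e : ∀ θ : ℝ, (poissonKernel 0 ((ρ ^ 2 : ℝ) : ℂ) • fun _ : ℂ => (1 : ℝ)) (circleMap 0 ρ θ)
      = (1 - ρ ^ 2) * (‖1 - circleMap 0 ρ θ‖ ^ 2)⁻¹ := by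
    intro θ
    have hn : ‖circleMap 0 ρ θ - ((ρ ^ 2 : ℝ) : ℂ)‖ ^ 2 = ρ ^ 2 * ‖1 - circleMap 0 ρ θ‖ ^ 2 := by
      have hz : ‖circleMap 0 ρ θ‖ ^ 2 = ρ ^ 2 := by simp
      rw [← Complex.normSq_eq_norm_sq] at hz ⊢
      rw [← Complex.normSq_eq_norm_sq]
      generalize circleMap 0 ρ θ = z at *
      simp only [Complex.normSq_apply, Complex.sub_re, Complex.sub_im, Complex.ofReal_re,
        Complex.ofReal_im, Complex.one_re, Complex.one_im] at hz ⊢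
      linear_combination (1 - ρ ^ 2) * hz
    simp only [Pi.smul_apply', smul_eq_mul, mul_one, poissonKernel_def, sub_zero]
    rw [hn]
    simp only [norm_circleMap_zero, sq_abs, Complex.norm_real, Real.norm_eq_abs, abs_pow]
    field_simp
  simp_rw [e] at h
  rw [intervalIntegral.integral_const_mul, smul_eq_mul] at h
  field_simp at h ⊢
  linarith


lemma csig_two_bound [CompleteSpace A] (h1 : ‖(1 : A)‖ ≤ 1) (S : A) (C r : ℝ)
    (hu : ∀ z : ℂ, ‖z‖ < 1 → IsUnit (1 - z • S))
    (hb : ∀ z : ℂ, ‖z‖ < 1 → ‖Ring.inverse (1 - z • S)‖ ≤ C * (1 - ‖z‖) ^ (-(r + 1)))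
    (ρ : ℝ) (h0 : 0 < ρ) (hρ : ρ < 1) (n : ℕ) :
    ‖csig S 2 n‖ ≤ (1 - ρ ^ 2)⁻¹ * (C * (1 - ρ) ^ (-(r + 1))) * ρ⁻¹ ^ n := by
  set f : ℂ → A := fun z => ((1 - z) ^ 2)⁻¹ • Ring.inverse (1 - z • S) with hf
  have hne : ∀ z : ℂ, ‖z‖ < 1 → (1 - z) ≠ 0 := by
    intro z hz h
    have : z = 1 := (sub_eq_zero.1 h).symm
    simp [this] at hz
  have hdiff : ∀ z : ℂ, ‖z‖ < 1 → DifferentiableAt ℂ f z := by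
    intro z hz
    refine DifferentiableAt.smul (𝕜 := ℂ) (c := fun z : ℂ => ((1 - z) ^ 2)⁻¹)
      (f := fun z : ℂ => Ring.inverse (1 - z • S)) ?_ ?_
    · exact DifferentiableAt.inv (by fun_prop) (pow_ne_zero _ (hne z hz))
    · exact DifferentiableAt.comp (𝕜 := ℂ) (g := Ring.inverse)
        (f := fun z : ℂ => 1 - z • S) z (differentiableAt_inverse (hu z hz)) (by fun_prop)
  obtain ⟨R, hR⟩ : ∃ R : NNReal, (R : ℝ) = ρ := ⟨⟨ρ, h0.le⟩, rfl⟩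
  have hps := DifferentiableOn.hasFPowerSeriesOnBall (f := f) (c := 0) (R := R)
    (fun z hz => (hdiff z (lt_of_le_of_lt (by simpa [hR] using hz) hρ)).differentiableWithinAt)
    (by rw [← NNReal.coe_pos, hR]; exact h0)
  rw [hR] at hps
  obtain ⟨P, hP⟩ : ∃ P : FormalMultilinearSeries ℂ ℂ A, ∀ n, P.coeff n = csig S 2 n :=
    ⟨fun n => ContinuousMultilinearMap.mkPiRing ℂ (Fin n) (csig S 2 n), fun n => by
      simp [FormalMultilinearSeries.coeff]⟩
  have hps2 : HasFPowerSeriesAt f P 0 := by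
    refine hasFPowerSeriesAt_iff.2 ?_
    have hM : 0 < 2 + ‖S‖ := by positivity
    have : Metric.ball (0 : ℂ) (2 + ‖S‖)⁻¹ ∈ 𝓝 (0 : ℂ) :=
      Metric.ball_mem_nhds _ (by positivity)
    filter_upwards [this] with z hz
    have hz' : ‖z‖ * (2 + ‖S‖) < 1 := by
      rw [mem_ball_zero_iff, ← one_div, lt_div_iff₀ hM] at hz
      exact hz
    have hz1 : ‖z‖ < 1 := by
      have := norm_nonneg z
      have := norm_nonneg S
      nlinarith
    have hs : Summable (fun n => z ^ n • csig S 2 n) := by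
      refine Summable.of_norm_bounded (g := fun n => 2 ^ 2 * (‖z‖ * (2 + ‖S‖)) ^ n)
        ((summable_geometric_of_lt_one (by positivity) hz').mul_left _) fun n => ?_
      rw [norm_smul, norm_pow, mul_pow]
      calc _ ≤ ‖z‖ ^ n * (2 ^ 2 * (2 + ‖S‖) ^ n) := by
            gcongr
            exact csig_crude h1 S 2 n
        _ = _ := by ring
    obtain ⟨F, hF⟩ := hs
    have hinv := csig_hasSum_inv S 2 z F hF
    have hFf : f z = F := by
      have hR : Ring.inverse (1 - z • S) = (1 - z) ^ 2 • F :=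
        Ring.inverse_unit ⟨1 - z • S, (1 - z) ^ 2 • F, hinv.1, hinv.2⟩
      simp only [hf]
      rw [hR, smul_smul, inv_mul_cancel₀ (pow_ne_zero _ (hne z hz1)), one_smul]
    rw [zero_add, hFf]
    simpa only [hP] using hF
  have heq := hps.hasFPowerSeriesAt.eq_formalMultilinearSeries hps2
  have hnorm : ‖cauchyPowerSeries f 0 ρ n‖ = ‖csig S 2 n‖ := by
    rw [heq, FormalMultilinearSeries.norm_apply_eq_norm_coef, hP]
  rw [← hnorm]
  refine (norm_cauchyPowerSeries_le f 0 ρ n).trans ?_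
  rw [abs_of_pos h0]
  gcongr ?_ * _
  set D := C * (1 - ρ) ^ (-(r + 1)) with hD
  have hlt : ∀ θ : ℝ, ‖circleMap 0 ρ θ‖ < 1 := fun θ => by
    rw [norm_circleMap_zero, abs_of_pos h0]; exact hρ
  have hc : Continuous fun θ : ℝ => ‖f (circleMap 0 ρ θ)‖ := by
    refine Continuous.norm (continuous_iff_continuousAt.2 fun θ => ?_)
    exact ContinuousAt.comp (hdiff _ (hlt θ)).continuousAt (continuous_circleMap 0 ρ).continuousAt
  have hc2 : Continuous fun θ : ℝ => (‖1 - circleMap 0 ρ θ‖ ^ 2)⁻¹ * D := by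
    refine Continuous.mul (Continuous.inv₀ (by fun_prop) fun θ => ?_) continuous_const
    exact pow_ne_zero _ (norm_ne_zero_iff.2 (hne _ (hlt θ)))
  rw [← poisson_avg ρ h0 hρ, mul_assoc, ← intervalIntegral.integral_mul_const]
  gcongr
  refine intervalIntegral.integral_mono_on (by positivity) (hc.intervalIntegrable _ _)
    (hc2.intervalIntegrable _ _) fun θ _ => ?_
  have := hb _ (hlt θ)
  rw [norm_circleMap_zero, abs_of_pos h0] at this
  simp only [hf, norm_smul, norm_inv, norm_pow]
  gcongr

end Aux

section Aux2
variable {X : Type*} [NormedAddCommGroup X] [NormedSpace ℂ X]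

lemma cesaro_eq (p : ℕ) (hp : 1 ≤ p) (S : X →L[ℂ] X) (n : ℕ) :
    cesaroMean p S n =
      ((p.factorial : ℂ) / ∏ i ∈ Finset.range p, ((n : ℂ) + 1 + i)) • csig S p n := by
  obtain ⟨q, rfl⟩ : ∃ q, p = q + 1 := ⟨p - 1, by omega⟩
  rw [csig_closed, cesaroMean, Finset.smul_sum, Finset.smul_sum]
  refine Finset.sum_congr rfl fun j _ => ?_
  rw [smul_smul, smul_smul]
  congr 1
  have e : n - j + (q + 1) - 1 = n - j + q := by omega
  have h := Nat.add_choose_mul_factorial_mul_factorial (n - j) q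
  have h' : (((n - j + q).choose q : ℕ) : ℂ) * ((n - j).factorial : ℂ) * (q.factorial : ℂ)
      = ((n - j + q).factorial : ℂ) := by
    exact_mod_cast h
  have hn : ((n - j).factorial : ℂ) ≠ 0 := by exact_mod_cast Nat.factorial_ne_zero _
  rw [e, ← h', Nat.factorial_succ]
  push_cast
  field_simp

lemma cesaro_norm (p : ℕ) (hp : 1 ≤ p) (S : X →L[ℂ] X) (n : ℕ) :
    ‖cesaroMean p S n‖ =
      ((p.factorial : ℝ) / ∏ i ∈ Finset.range p, ((n : ℝ) + 1 + i)) * ‖csig S p n‖ := by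
  rw [cesaro_eq p hp, norm_smul, norm_div, norm_prod]
  congr 2
  · simp
  · refine Finset.prod_congr rfl fun i _ => ?_
    have : ((n : ℂ) + 1 + i) = ((n + 1 + i : ℕ) : ℂ) := by push_cast; ring
    rw [this, Complex.norm_natCast]
    push_cast; ring

lemma prod_lower (p n : ℕ) :
    ((n : ℝ) + 1) ^ p ≤ ∏ i ∈ Finset.range p, ((n : ℝ) + 1 + i) := by
  calc ((n : ℝ) + 1) ^ p = ∏ i ∈ Finset.range p, ((n : ℝ) + 1) := by simp
    _ ≤ _ := Finset.prod_le_prod (fun i _ => by positivity) (fun i _ => by simp)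

lemma prod_upper (p n : ℕ) :
    ∏ i ∈ Finset.range p, ((n : ℝ) + 1 + i) ≤ p.factorial * ((n : ℝ) + 1) ^ p := by
  induction p with
  | zero => simp
  | succ p ih =>
    rw [Finset.prod_range_succ, Nat.factorial_succ]
    calc _ ≤ (p.factorial * ((n : ℝ) + 1) ^ p) * (((n : ℝ) + 1) * (p + 1)) := by
          gcongr
          nlinarith [Nat.cast_nonneg (α := ℝ) n, Nat.cast_nonneg (α := ℝ) p,
            mul_nonneg (Nat.cast_nonneg (α := ℝ) n) (Nat.cast_nonneg (α := ℝ) p)]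
      _ = _ := by push_cast; ring

lemma norm_one_le_one' : ‖(1 : X →L[ℂ] X)‖ ≤ 1 := ContinuousLinearMap.norm_id_le

/-- forward direction: core estimate -/
lemma forward_core [CompleteSpace X] (p : ℕ) (hp : 1 ≤ p) (r : ℝ) (hr : 0 ≤ r) (C : ℝ) :
    ∃ K : ℝ, ∀ S : X →L[ℂ] X,
      (∀ n : ℕ, 1 ≤ n → (n : ℝ) ^ (-r) * ‖cesaroMean p S n‖ ≤ C) →
      ∀ t : ℝ, 0 ≤ t → t < 1 → ∃ G : X →L[ℂ] X,
        (1 - (t : ℂ) • S) * G = 1 ∧ G * (1 - (t : ℂ) • S) = 1 ∧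
        ‖G‖ ≤ K * (1 - t) ^ (-(r + 1)) := by
  obtain ⟨K, hK0, hK⟩ := geom_bound (p + r) (by positivity)
  set B := max C 1 with hB
  have hB0 : 0 ≤ B := le_trans zero_le_one (le_max_right _ _)
  refine ⟨B * K, fun S hS t ht0 ht1 => ?_⟩
  have hsig : ∀ n : ℕ, ‖csig S p n‖ ≤ B * ((n : ℝ) + 1) ^ (p + r) := by
    intro n
    rcases Nat.eq_zero_or_pos n with rfl | hn
    · rw [csig_zero_right]
      have hB1 : 1 ≤ B := le_max_right _ _
      have := (norm_one_le_one' (X := X)).trans hB1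
      simpa using this
    · have h := hS n hn
      have hn' : (0 : ℝ) < n := by exact_mod_cast hn
      rw [Real.rpow_neg hn'.le, ← div_eq_inv_mul, div_le_iff₀ (by positivity), cesaro_norm p hp] at h
      have hP : 0 < ∏ i ∈ Finset.range p, ((n : ℝ) + 1 + i) :=
        Finset.prod_pos fun i _ => by positivity
      have hf : (0 : ℝ) < p.factorial := by exact_mod_cast Nat.factorial_pos p
      have hup := prod_upper p n
      have h2 : ‖csig S p n‖ ≤ ((n : ℝ) + 1) ^ p *
          ((p.factorial / ∏ i ∈ Finset.range p, ((n : ℝ) + 1 + i)) * ‖csig S p n‖) := by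
        have : 1 ≤ ((n : ℝ) + 1) ^ p * (p.factorial / ∏ i ∈ Finset.range p, ((n : ℝ) + 1 + i)) := by
          rw [← mul_div_assoc, le_div_iff₀ hP]
          linarith
        rw [← mul_assoc]
        exact le_mul_of_one_le_left (norm_nonneg _) this
      calc ‖csig S p n‖ ≤ ((n : ℝ) + 1) ^ p * (C * (n : ℝ) ^ r) :=
            h2.trans (by gcongr)
        _ ≤ ((n : ℝ) + 1) ^ p * (B * ((n : ℝ) + 1) ^ r) := by
            gcongr
            · exact le_max_left _ _
            · linarith
        _ = _ := by
            rw [Real.rpow_add (by positivity), Real.rpow_natCast]; ring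
  obtain ⟨hs1, hs2⟩ := hK t ht0 ht1
  have hbd : ∀ n : ℕ, ‖(t : ℂ) ^ n • csig S p n‖ ≤ B * (((n : ℝ) + 1) ^ (p + r) * t ^ n) := by
    intro n
    rw [norm_smul, norm_pow, Complex.norm_real, Real.norm_of_nonneg ht0]
    calc _ ≤ t ^ n * (B * ((n : ℝ) + 1) ^ (p + r)) := by gcongr; exact hsig n
      _ = _ := by ring
  have hsum : Summable fun n : ℕ => (t : ℂ) ^ n • csig S p n :=
    Summable.of_norm_bounded (hs1.mul_left B) hbd
  obtain ⟨F, hF⟩ := hsum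
  obtain ⟨i1, i2⟩ := csig_hasSum_inv S p t F hF
  refine ⟨_, i1, i2, ?_⟩
  have hFn : ‖F‖ ≤ B * (K * (1 - t) ^ (-(p + r + 1))) := by
    rw [← hF.tsum_eq]
    refine (tsum_of_norm_bounded (hs1.mul_left B).hasSum hbd).trans ?_
    rw [tsum_mul_left]
    gcongr
  have h1t : 0 < 1 - t := by linarith
  have hn1 : ‖(1 - (t : ℂ)) ^ p‖ = (1 - t) ^ p := by
    rw [norm_pow, ← Complex.ofReal_one, ← Complex.ofReal_sub, Complex.norm_real,
      Real.norm_of_nonneg h1t.le]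
  rw [norm_smul, hn1]
  calc (1 - t) ^ p * ‖F‖ ≤ (1 - t) ^ p * (B * (K * (1 - t) ^ (-(p + r + 1)))) := by gcongr
    _ = B * K * ((1 - t) ^ (p : ℝ) * (1 - t) ^ (-(p + r + 1))) := by
      rw [Real.rpow_natCast]; ring
    _ = _ := by
      rw [← Real.rpow_add h1t]
      congr 2; ring

/-- backward direction: core estimate -/
lemma backward_core [CompleteSpace X] (p : ℕ) (hp : 2 ≤ p) (r : ℝ) (hr : 0 ≤ r) (C : ℝ)
    (S : X →L[ℂ] X)
    (hu : ∀ z : ℂ, ‖z‖ < 1 → IsUnit (1 - z • S))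
    (hb : ∀ z : ℂ, ‖z‖ < 1 → ‖Ring.inverse (1 - z • S)‖ ≤ C * (1 - ‖z‖) ^ (-(r + 1)))
    (n : ℕ) (hn : 1 ≤ n) :
    (n : ℝ) ^ (-r) * ‖cesaroMean p S n‖ ≤ p.factorial * max (Real.exp 1 * C) 1 * 2 ^ r := by
  set B := max (Real.exp 1 * C) 1 with hB
  have hB0 : 0 ≤ B := le_trans zero_le_one (le_max_right _ _)
  have hC0 : 0 ≤ C := by
    have := (norm_nonneg _).trans (hb 0 (by simp))
    simpa using this
  have h2 : ∀ n : ℕ, ‖csig S 2 n‖ ≤ B * ((n : ℝ) + 1) ^ (((2 : ℕ) : ℝ) + r) := by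
    intro n
    rcases Nat.eq_zero_or_pos n with rfl | hn
    · rw [csig_zero_right]
      have hB1 : 1 ≤ B := le_max_right _ _
      have := (norm_one_le_one' (X := X)).trans hB1
      simpa using this
    · have hn' : (0 : ℝ) < n := by exact_mod_cast hn
      have hρ1 : (n : ℝ) / (n + 1) < 1 := by rw [div_lt_one (by positivity)]; linarith
      have h := csig_two_bound norm_one_le_one' S C r hu hb (n / (n + 1)) (by positivity) hρ1 n
      have e1 : 1 - (n : ℝ) / (n + 1) = ((n : ℝ) + 1)⁻¹ := by field_simp; ring
      have e2 : (1 - ((n : ℝ) / (n + 1)) ^ 2)⁻¹ ≤ (n : ℝ) + 1 := by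
        rw [inv_le_comm₀ (by nlinarith [show 0 < (n : ℝ) / (n + 1) by positivity]) (by positivity),
          ← e1]
        nlinarith [show 0 < (n : ℝ) / (n + 1) by positivity]
      have e3 : ((n : ℝ) / (n + 1))⁻¹ ^ n ≤ Real.exp 1 := by
        have : ((n : ℝ) / (n + 1))⁻¹ ≤ Real.exp (1 / n) := by
          have := Real.add_one_le_exp (1 / (n : ℝ))
          have e : ((n : ℝ) / (n + 1))⁻¹ = 1 / n + 1 := by field_simp; ring
          rw [e]; exact this
        calc _ ≤ Real.exp (1 / n) ^ n := pow_le_pow_left₀ (by positivity) this n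
          _ = Real.exp 1 := by
            rw [← Real.exp_nat_mul]; congr 1; field_simp
      have e4 : (1 - (n : ℝ) / (n + 1)) ^ (-(r + 1)) = ((n : ℝ) + 1) ^ (r + 1) := by
        rw [e1, Real.inv_rpow (by positivity), Real.rpow_neg (by positivity), inv_inv]
      rw [e4] at h
      calc _ ≤ _ := h
        _ ≤ ((n : ℝ) + 1) * (C * ((n : ℝ) + 1) ^ (r + 1)) * Real.exp 1 := by gcongr
        _ = (Real.exp 1 * C) * ((n : ℝ) + 1) ^ (((2 : ℕ) : ℝ) + r) := by
          have : (((2 : ℕ) : ℝ) + r) = 1 + (r + 1) := by push_cast; ring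
          rw [this, Real.rpow_add (show (0 : ℝ) < n + 1 by positivity) 1 (r + 1), Real.rpow_one]
          ring
        _ ≤ _ := by
          gcongr
          exact le_max_left _ _
  have hq : ∀ q : ℕ, ∀ n : ℕ, ‖csig S (2 + q) n‖ ≤
      B * ((n : ℝ) + 1) ^ (((2 + q : ℕ) : ℝ) + r) := by
    intro q
    induction q with
    | zero => exact h2
    | succ q ih =>
      intro n
      have hc : csig S (2 + (q + 1)) n = ∑ k ∈ Finset.range (n + 1), csig S (2 + q) k := rfl
      rw [hc]
      calc _ ≤ ∑ k ∈ Finset.range (n + 1), B * ((n : ℝ) + 1) ^ (((2 + q : ℕ) : ℝ) + r) := by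
            refine norm_sum_le_of_le _ fun k hk => (ih k).trans ?_
            have : (k : ℝ) ≤ n := by
              have := Finset.mem_range.1 hk
              exact_mod_cast Nat.lt_succ_iff.1 this
            gcongr
        _ = _ := by
            rw [Finset.sum_const, Finset.card_range, nsmul_eq_mul]
            have : (((2 + (q + 1) : ℕ) : ℝ) + r) = 1 + (((2 + q : ℕ) : ℝ) + r) := by
              push_cast; ring
            rw [this, Real.rpow_add (by positivity) 1, Real.rpow_one]
            push_cast; ring
  have hpn := hq (p - 2) n
  rw [show 2 + (p - 2) = p by omega] at hpn
  have hn' : (0 : ℝ) < n := by exact_mod_cast hn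
  have hn1 : (1 : ℝ) ≤ n := by exact_mod_cast hn
  rw [Real.rpow_neg hn'.le, ← div_eq_inv_mul, div_le_iff₀ (by positivity),
    cesaro_norm p (by omega)]
  have hlow := prod_lower p n
  calc _ ≤ (p.factorial / ((n : ℝ) + 1) ^ p) * (B * ((n : ℝ) + 1) ^ ((p : ℝ) + r)) := by gcongr
    _ = p.factorial * B * ((n : ℝ) + 1) ^ r := by
      rw [Real.rpow_add (by positivity), Real.rpow_natCast]
      field_simp
    _ ≤ p.factorial * B * (2 * (n : ℝ)) ^ r := by
      gcongr
      linarith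
    _ = _ := by rw [Real.mul_rpow (by norm_num) hn'.le]; ring

end Aux2

/-- Kreiss-type equivalence for p ≥ 2: sup_{n≥1,|λ|=1} n^{−r} ‖M_n^{(p)}(λT)‖ < ∞
iff T − λI is invertible for all |λ| > 1 with
sup_{|λ|>1} ((|λ|−1)^{r+1}/|λ|^r) ‖(T − λI)⁻¹‖ < ∞. -/
theorem stmt16 {X : Type*} [NormedAddCommGroup X] [NormedSpace ℂ X] [CompleteSpace X]
    (T : X →L[ℂ] X)
    (p : ℕ) (hp : 2 ≤ p)
    (r : ℝ) (hr : 0 ≤ r) :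
    (∃ C : ℝ, ∀ n : ℕ, 1 ≤ n → ∀ lam : ℂ, ‖lam‖ = 1 →
        (n : ℝ) ^ (-r) * ‖cesaroMean p (lam • T) n‖ ≤ C)
      ↔ ((∀ lam : ℂ, 1 < ‖lam‖ →
            ∃ S : X →L[ℂ] X,
              (T - lam • (1 : X →L[ℂ] X)) ∘L S = 1 ∧
              S ∘L (T - lam • (1 : X →L[ℂ] X)) = 1) ∧
          ∃ C : ℝ, ∀ lam : ℂ, 1 < ‖lam‖ →
            ∀ S : X →L[ℂ] X,
              (T - lam • (1 : X →L[ℂ] X)) ∘L S = 1 →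
              S ∘L (T - lam • (1 : X →L[ℂ] X)) = 1 →
              ((‖lam‖ - 1) ^ (r + 1) / ‖lam‖ ^ r) * ‖S‖ ≤ C) := by
  constructor
  · rintro ⟨C, hC⟩
    obtain ⟨K, hK⟩ := forward_core (X := X) p (by omega) r hr C
    have main : ∀ lam : ℂ, 1 < ‖lam‖ → ∃ S : X →L[ℂ] X,
        (T - lam • (1 : X →L[ℂ] X)) * S = 1 ∧ S * (T - lam • (1 : X →L[ℂ] X)) = 1 ∧
        ((‖lam‖ - 1) ^ (r + 1) / ‖lam‖ ^ r) * ‖S‖ ≤ K := by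
      intro lam hl
      have hl0 : 0 < ‖lam‖ := by linarith
      have hlne : lam ≠ 0 := norm_pos_iff.1 hl0
      have hnc : ((‖lam‖ : ℝ) : ℂ) ≠ 0 := by exact_mod_cast hl0.ne'
      obtain ⟨G, g1, g2, g3⟩ := hK (((‖lam‖ : ℂ) * lam⁻¹) • T)
        (fun n hn => hC n hn _ (by simp [hl0.ne'])) ‖lam‖⁻¹ (by positivity)
        (inv_lt_one_of_one_lt₀ hl)
      have e : (((‖lam‖⁻¹ : ℝ) : ℂ)) • (((‖lam‖ : ℂ) * lam⁻¹) • T) = lam⁻¹ • T := by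
        rw [smul_smul]
        congr 1
        push_cast
        field_simp
      rw [e] at g1 g2
      have e2 : T - lam • (1 : X →L[ℂ] X) = (-lam) • (1 - lam⁻¹ • T) := by
        rw [smul_sub, smul_smul, neg_mul, mul_inv_cancel₀ hlne]
        simp
        abel
      have hc : (-lam) * (-lam)⁻¹ = 1 := mul_inv_cancel₀ (neg_ne_zero.2 hlne)
      refine ⟨(-lam)⁻¹ • G, ?_, ?_, ?_⟩
      · rw [e2, smul_mul_smul_comm, g1, hc, one_smul]
      · rw [e2, smul_mul_smul_comm, g2, mul_comm, hc, one_smul]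
      · have hd : 0 < ‖lam‖ - 1 := by linarith
        have e3 : 1 - ‖lam‖⁻¹ = (‖lam‖ - 1) / ‖lam‖ := by field_simp
        rw [e3, Real.rpow_neg (by positivity), Real.div_rpow hd.le hl0.le, ← div_eq_mul_inv,
          le_div_iff₀ (by positivity)] at g3
        rw [norm_smul, norm_inv, norm_neg]
        refine le_trans (le_of_eq ?_) g3
        rw [Real.rpow_add hl0 r 1, Real.rpow_one]
        field_simp
    refine ⟨fun lam hl => ?_, K, fun lam hl S h1 h2 => ?_⟩
    · obtain ⟨S, h1, h2, _⟩ := main lam hl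
      exact ⟨S, h1, h2⟩
    · obtain ⟨S', h1', h2', h3⟩ := main lam hl
      have : S = S' := left_inv_eq_right_inv (M := X →L[ℂ] X) h2 h1'
      rw [this]; exact h3
  · rintro ⟨hinv, C, hC⟩
    set D := max C 1 with hD
    have hD1 : 1 ≤ D := le_max_right _ _
    have main : ∀ w : ℂ, ‖w‖ < 1 → IsUnit (1 - w • T) ∧
        ‖Ring.inverse (1 - w • T)‖ ≤ D * (1 - ‖w‖) ^ (-(r + 1)) := by
      intro w hw
      rcases eq_or_ne w 0 with rfl | hw0
      · simp only [zero_smul, sub_zero, isUnit_one, Ring.inverse_one, norm_zero, Real.one_rpow,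
          mul_one, true_and]
        exact norm_one_le_one'.trans hD1
      · have hwp : 0 < ‖w‖ := norm_pos_iff.2 hw0
        have hl : 1 < ‖w⁻¹‖ := by rw [norm_inv]; exact (one_lt_inv₀ hwp).2 hw
        obtain ⟨S, h1, h2⟩ := hinv w⁻¹ hl
        have hb := hC w⁻¹ hl S h1 h2
        change (T - w⁻¹ • (1 : X →L[ℂ] X)) * S = 1 at h1
        change S * (T - w⁻¹ • (1 : X →L[ℂ] X)) = 1 at h2
        have e2 : 1 - w • T = (-w) • (T - w⁻¹ • (1 : X →L[ℂ] X)) := by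
          rw [smul_sub, smul_smul, neg_mul, mul_inv_cancel₀ hw0]
          simp
          abel
        have hc : (-w) * (-w)⁻¹ = 1 := mul_inv_cancel₀ (neg_ne_zero.2 hw0)
        have i1 : (1 - w • T) * ((-w)⁻¹ • S) = 1 := by
          rw [e2, smul_mul_smul_comm, h1, hc, one_smul]
        have i2 : ((-w)⁻¹ • S) * (1 - w • T) = 1 := by
          rw [e2, smul_mul_smul_comm, h2, mul_comm, hc, one_smul]
        have hR : Ring.inverse (1 - w • T) = (-w)⁻¹ • S :=
          Ring.inverse_unit ⟨1 - w • T, (-w)⁻¹ • S, i1, i2⟩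
        refine ⟨⟨⟨1 - w • T, (-w)⁻¹ • S, i1, i2⟩, rfl⟩, ?_⟩
        have hd : 0 < 1 - ‖w‖ := by linarith
        rw [hR, norm_smul, norm_inv, norm_neg, Real.rpow_neg hd.le, ← div_eq_mul_inv,
          le_div_iff₀ (by positivity)]
        refine le_trans (le_of_eq ?_) (hb.trans (le_max_left C 1))
        have e3 : ‖w⁻¹‖ - 1 = (1 - ‖w‖) / ‖w‖ := by rw [norm_inv]; field_simp
        rw [e3, norm_inv, Real.div_rpow hd.le hwp.le, Real.inv_rpow hwp.le,
          Real.rpow_add hwp r 1, Real.rpow_one]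
        field_simp
    refine ⟨p.factorial * max (Real.exp 1 * D) 1 * 2 ^ r, fun n hn lam hlam => ?_⟩
    refine backward_core p hp r hr D (lam • T) (fun z hz => ?_) (fun z hz => ?_) n hn
    · rw [smul_smul]
      exact (main (z * lam) (by simpa [hlam] using hz)).1
    · have := (main (z * lam) (by simpa [hlam] using hz)).2
      rw [smul_smul]
      simpa [hlam] using this
end

section
/- Let r ≥ 0 be a real number and T ∈ B(X). Then sup over all integers n ≥ 1 and all μ ∈ ℂ with |μ| = 1 of n^{−r} ‖M_n(μT)‖ is finite if and only if sup over all n ∈ ℕ and all λ ∈ ℂ with |λ| > 1 of ((|λ|−1)^{r+1}/|λ|^r) · ‖Σ_{k=0}^n λ^{−k−1} T^k‖ is finite. -/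
open Filter Topology


/-- The Cesàro mean of an operator S: M_n(S) = (1/(n+1)) Σ_{j=0}^n S^j. -/
noncomputable def cesaroMean1 {X : Type*} [NormedAddCommGroup X] [NormedSpace ℂ X]
    (S : X →L[ℂ] X) (n : ℕ) : X →L[ℂ] X :=
  (((n : ℂ) + 1)⁻¹) • ∑ j ∈ Finset.range (n + 1), S ^ j

lemma aux_abel {E : Type*} [NormedAddCommGroup E] [NormedSpace ℂ E] (a : ℕ → E) (w : ℕ → ℝ)
    (n : ℕ) : ∑ j ∈ Finset.range (n + 1), (w j : ℂ) • a j
      = (w n : ℂ) • ∑ j ∈ Finset.range (n + 1), a j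
        + ∑ k ∈ Finset.range n, ((w k - w (k + 1) : ℝ) : ℂ) • ∑ j ∈ Finset.range (k + 1), a j := by
  induction n with
  | zero => simp
  | succ n ih =>
    rw [Finset.sum_range_succ, ih, Finset.sum_range_succ a (n + 1), Finset.sum_range_succ (fun k => ((w k - w (k + 1) : ℝ) : ℂ) • ∑ j ∈ Finset.range (k + 1), a j) n]
    push_cast
    module

lemma aux_abel_norm {E : Type*} [NormedAddCommGroup E] [NormedSpace ℂ E] (a : ℕ → E) (w : ℕ → ℝ)
    (n : ℕ) : ‖∑ j ∈ Finset.range (n + 1), (w j : ℂ) • a j‖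
      ≤ |w n| * ‖∑ j ∈ Finset.range (n + 1), a j‖
        + ∑ k ∈ Finset.range n, |w k - w (k + 1)| * ‖∑ j ∈ Finset.range (k + 1), a j‖ := by
  rw [aux_abel]
  refine (norm_add_le _ _).trans (add_le_add ?_ ((norm_sum_le _ _).trans (Finset.sum_le_sum ?_)))
  · rw [norm_smul, Complex.norm_real, Real.norm_eq_abs]
  · intro k _
    rw [norm_smul, Complex.norm_real, Real.norm_eq_abs]

lemma aux_one (s : ℝ) : ∃ K : ℝ, 0 ≤ K ∧ ∀ (n : ℕ) (x : ℝ), 0 ≤ x → x ≤ 1 → 0 ≤ s →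
    x ^ n * (((n : ℝ) + 1) ^ s * (1 - x) ^ s) ≤ K := by
  obtain ⟨N, hN⟩ := exists_nat_ge s
  refine ⟨N.factorial * Real.exp 2, by positivity, fun n x hx0 hx1 hs => ?_⟩
  have ht : 0 ≤ 1 - x := by linarith
  rw [← Real.mul_rpow (by positivity) ht]
  set y := ((n : ℝ) + 1) * (1 - x) with hy
  have hy0 : 0 ≤ y := by positivity
  have h1 : x ^ n ≤ Real.exp (1 - y) := by
    have : x ≤ Real.exp (-(1 - x)) := by
      have := Real.add_one_le_exp (-(1 - x)); linarith
    calc x ^ n ≤ Real.exp (-(1 - x)) ^ n := pow_le_pow_left₀ hx0 this n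
      _ = Real.exp (n * (-(1 - x))) := (Real.exp_nat_mul _ _).symm
      _ ≤ Real.exp (1 - y) := Real.exp_le_exp.2 (by rw [hy]; nlinarith)
  have h2 : y ^ s ≤ N.factorial * Real.exp (1 + y) := by
    calc y ^ s ≤ (1 + y) ^ s := Real.rpow_le_rpow hy0 (by linarith) hs
      _ ≤ (1 + y) ^ (N : ℝ) := Real.rpow_le_rpow_of_exponent_le (by linarith) hN
      _ = (1 + y) ^ N := Real.rpow_natCast _ _
      _ ≤ _ := by
        have := Real.pow_div_factorial_le_exp (1 + y) (by linarith) N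
        rw [div_le_iff₀ (by positivity)] at this
        linarith
  calc x ^ n * y ^ s ≤ Real.exp (1 - y) * (N.factorial * Real.exp (1 + y)) := by gcongr
    _ = N.factorial * (Real.exp (1 - y) * Real.exp (1 + y)) := by ring
    _ = _ := by rw [← Real.exp_add]; congr 2; ring

lemma aux_two (s : ℝ) (hs : 0 ≤ s) : ∃ K : ℝ, 0 ≤ K ∧ ∀ (n : ℕ) (x : ℝ), 0 ≤ x → x ≤ 1 →
    (1 - x) ^ s * (x ^ n * ((n : ℝ) + 1) ^ s
      + ∑ k ∈ Finset.range n, (x ^ k - x ^ (k + 1)) * ((k : ℝ) + 1) ^ s) ≤ K := by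
  obtain ⟨K, hK, h⟩ := aux_one s
  refine ⟨K + 2 ^ s * (2 * K), by positivity, fun n x hx0 hx1 => ?_⟩
  rw [mul_add]
  refine add_le_add (by have := h n x hx0 hx1 hs; linarith) ?_
  obtain ⟨q, hq0, hq1, rfl⟩ : ∃ q : ℝ, 0 ≤ q ∧ q ≤ 1 ∧ x = q ^ 2 :=
    ⟨√x, Real.sqrt_nonneg _, Real.sqrt_le_one.2 hx1, (Real.sq_sqrt hx0).symm⟩
  have h1q : 0 ≤ 1 - q := by linarith
  have hs1 : (1 - q ^ 2) ^ s ≤ 2 ^ s * (1 - q) ^ s := by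
    rw [← Real.mul_rpow (by norm_num) h1q]
    exact Real.rpow_le_rpow (by linarith) (by nlinarith) hs
  have hsum0 : 0 ≤ ∑ k ∈ Finset.range n, ((q ^ 2) ^ k - (q ^ 2) ^ (k + 1)) * ((k : ℝ) + 1) ^ s := by
    refine Finset.sum_nonneg fun k _ => mul_nonneg ?_ (by positivity)
    rw [sub_nonneg]
    exact pow_le_pow_of_le_one hx0 hx1 (Nat.le_succ k)
  refine (mul_le_mul_of_nonneg_right hs1 hsum0).trans ?_
  rw [mul_assoc]
  refine mul_le_mul_of_nonneg_left ?_ (by positivity)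
  rw [Finset.mul_sum]
  calc _ ≤ ∑ k ∈ Finset.range n, 2 * K * (q ^ k - q ^ (k + 1)) := by
        refine Finset.sum_le_sum fun k _ => ?_
        have hk := h k q hq0 hq1 hs
        have hd : 0 ≤ q ^ k * (1 - q) := by positivity
        calc _ = ((q ^ k * (1 - q)) * (1 + q)) * (q ^ k * (((k : ℝ) + 1) ^ s * (1 - q) ^ s)) := by
              ring
          _ ≤ ((q ^ k * (1 - q)) * 2) * K := by gcongr; linarith
          _ = _ := by ring
    _ = 2 * K * (1 - q ^ n) := by
        rw [← Finset.mul_sum, Finset.sum_range_sub']; simp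
    _ ≤ 2 * K := by
        have : 0 ≤ q ^ n := by positivity
        nlinarith

lemma aux_key {X : Type*} [NormedAddCommGroup X] [NormedSpace ℂ X]
    (T : X →L[ℂ] X) (r : ℝ) (ρ : ℝ) (hρ : 1 < ρ) (μ : ℂ) (hμ : ‖μ‖ = 1) (lam : ℂ)
    (hl : lam * μ = ρ) (n : ℕ) :
    ((‖lam‖ - 1) ^ (r + 1) / ‖lam‖ ^ r) *
            ‖∑ k ∈ Finset.range (n + 1), (lam ^ (-(k : ℤ) - 1)) • T ^ k‖
      = (1 - ρ⁻¹) ^ (r + 1) *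
        ‖∑ k ∈ Finset.range (n + 1), ((ρ⁻¹ ^ k : ℝ) : ℂ) • (μ • T) ^ k‖ := by
  have hρ0 : 0 < ρ := by linarith
  have hn : ‖lam‖ = ρ := by
    have := congrArg norm hl
    rw [norm_mul, hμ, mul_one, Complex.norm_real, Real.norm_of_nonneg hρ0.le] at this
    exact this
  have hμ0 : μ ≠ 0 := by rintro rfl; simp at hμ
  have hl0 : lam ≠ 0 := by rintro rfl; simp at hn; linarith
  have hs : ∑ k ∈ Finset.range (n + 1), (lam ^ (-(k : ℤ) - 1)) • T ^ k
      = lam⁻¹ • ∑ k ∈ Finset.range (n + 1), ((ρ⁻¹ ^ k : ℝ) : ℂ) • (μ • T) ^ k := by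
    rw [Finset.smul_sum]
    refine Finset.sum_congr rfl fun k _ => ?_
    rw [smul_pow, smul_smul, smul_smul]
    congr 1
    push_cast
    rw [← hl, zpow_sub₀ hl0, zpow_neg, zpow_natCast, zpow_one, mul_inv, mul_pow, inv_pow, inv_pow]
    field_simp
  rw [hs, norm_smul, norm_inv, hn, ← mul_assoc]
  congr 1
  have : 1 - ρ⁻¹ = (ρ - 1) / ρ := by field_simp
  rw [this, Real.div_rpow (by linarith) hρ0.le, Real.rpow_add_one hρ0.ne' r]
  field_simp

lemma aux_ces {X : Type*} [NormedAddCommGroup X] [NormedSpace ℂ X]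
    (S : X →L[ℂ] X) (n : ℕ) :
    ‖∑ j ∈ Finset.range (n + 1), S ^ j‖ = ((n : ℝ) + 1) * ‖cesaroMean1 S n‖ := by
  unfold cesaroMean1
  have : ‖((n : ℂ) + 1)‖ = (n : ℝ) + 1 := by
    have := Complex.norm_natCast (n + 1)
    push_cast at this
    exact this
  rw [norm_smul, norm_inv, this]
  field_simp

/-- Kreiss-type equivalence for p = 1: sup_{n≥1,|μ|=1} n^{−r} ‖M_n(μT)‖ < ∞ iff
sup_{n∈ℕ,|λ|>1} ((|λ|−1)^{r+1}/|λ|^r) ‖Σ_{k=0}^n λ^{−k−1} T^k‖ < ∞. -/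
theorem stmt17 {X : Type*} [NormedAddCommGroup X] [NormedSpace ℂ X] [CompleteSpace X]
    (T : X →L[ℂ] X)
    (r : ℝ) (hr : 0 ≤ r) :
    (∃ C : ℝ, ∀ n : ℕ, 1 ≤ n → ∀ μ : ℂ, ‖μ‖ = 1 →
        (n : ℝ) ^ (-r) * ‖cesaroMean1 (μ • T) n‖ ≤ C)
      ↔ (∃ C : ℝ, ∀ (n : ℕ) (lam : ℂ), 1 < ‖lam‖ →
          ((‖lam‖ - 1) ^ (r + 1) / ‖lam‖ ^ r) *
            ‖∑ k ∈ Finset.range (n + 1), (lam ^ (-(k : ℤ) - 1)) • T ^ k‖ ≤ C) := by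
  constructor
  · rintro ⟨C₀, hC₀⟩
    obtain ⟨C, hC1, hC⟩ : ∃ C : ℝ, 1 ≤ C ∧ ∀ (n : ℕ) (μ : ℂ), ‖μ‖ = 1 →
        ‖∑ j ∈ Finset.range (n + 1), (μ • T) ^ j‖ ≤ C * ((n : ℝ) + 1) ^ (r + 1) := by
      refine ⟨max C₀ 1, le_max_right _ _, fun n μ hμ => ?_⟩
      rcases Nat.eq_zero_or_pos n with rfl | hn
      · have : ‖(1 : X →L[ℂ] X)‖ ≤ 1 := ContinuousLinearMap.norm_id_le
        simpa using Or.inr this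
      · have h := (hC₀ n hn μ hμ).trans (le_max_left C₀ 1)
        have hn0 : (0 : ℝ) < n := by exact_mod_cast hn
        have hp : (0 : ℝ) < (n : ℝ) ^ r := by positivity
        rw [Real.rpow_neg hn0.le, inv_mul_le_iff₀ hp] at h
        rw [aux_ces, Real.rpow_add_one (by positivity)]
        have h2 : (n : ℝ) ^ r ≤ ((n : ℝ) + 1) ^ r := Real.rpow_le_rpow hn0.le (by linarith) hr
        have h3 : 0 ≤ max C₀ 1 := zero_le_one.trans (le_max_right _ _)
        calc _ ≤ ((n : ℝ) + 1) * (((n : ℝ) + 1) ^ r * max C₀ 1) := by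
              gcongr
              exact h.trans (by gcongr)
          _ = _ := by ring
    obtain ⟨K, hK, hK2⟩ := aux_two (r + 1) (by linarith)
    refine ⟨C * K, fun n lam hlam => ?_⟩
    have hl0 : lam ≠ 0 := by rintro rfl; simp at hlam; linarith
    have hμ : ‖(‖lam‖ : ℂ) / lam‖ = 1 := by
      rw [norm_div, Complex.norm_real, norm_norm, div_self (by simpa using hl0)]
    rw [aux_key T r ‖lam‖ hlam _ hμ lam (by field_simp) n]
    set μ := (‖lam‖ : ℂ) / lam
    set x := ‖lam‖⁻¹ with hx
    have hx0 : 0 ≤ x := by positivity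
    have hx1 : x ≤ 1 := inv_le_one_of_one_le₀ hlam.le
    have hx1' : 0 ≤ 1 - x := by linarith
    have hab := aux_abel_norm (fun k => (μ • T) ^ k) (fun k => x ^ k) n
    have : ‖∑ k ∈ Finset.range (n + 1), ((x ^ k : ℝ) : ℂ) • (μ • T) ^ k‖ ≤
        C * (x ^ n * ((n : ℝ) + 1) ^ (r + 1)
      + ∑ k ∈ Finset.range n, (x ^ k - x ^ (k + 1)) * ((k : ℝ) + 1) ^ (r + 1)) := by
      refine hab.trans ?_
      rw [mul_add, Finset.mul_sum]
      refine add_le_add ?_ (Finset.sum_le_sum fun k _ => ?_)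
      · have := hC n μ hμ
        rw [abs_of_nonneg (by positivity)]
        calc _ ≤ x ^ n * (C * ((n : ℝ) + 1) ^ (r + 1)) := by gcongr
          _ = _ := by ring
      · have := hC k μ hμ
        have hd : 0 ≤ x ^ k - x ^ (k + 1) :=
          sub_nonneg.2 (pow_le_pow_of_le_one hx0 hx1 (Nat.le_succ k))
        rw [abs_of_nonneg hd]
        calc _ ≤ (x ^ k - x ^ (k + 1)) * (C * ((k : ℝ) + 1) ^ (r + 1)) := by gcongr
          _ = _ := by ring
    calc _ ≤ (1 - x) ^ (r + 1) * (C * (x ^ n * ((n : ℝ) + 1) ^ (r + 1)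
      + ∑ k ∈ Finset.range n, (x ^ k - x ^ (k + 1)) * ((k : ℝ) + 1) ^ (r + 1))) := by gcongr
      _ = C * ((1 - x) ^ (r + 1) * (x ^ n * ((n : ℝ) + 1) ^ (r + 1)
      + ∑ k ∈ Finset.range n, (x ^ k - x ^ (k + 1)) * ((k : ℝ) + 1) ^ (r + 1))) := by ring
      _ ≤ C * K := by
        have := hK2 n x hx0 hx1
        gcongr
  · rintro ⟨C₀, hC₀⟩
    obtain ⟨C, hC0, hC⟩ : ∃ C : ℝ, 0 ≤ C ∧ ∀ (n : ℕ) (lam : ℂ), 1 < ‖lam‖ →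
          ((‖lam‖ - 1) ^ (r + 1) / ‖lam‖ ^ r) *
            ‖∑ k ∈ Finset.range (n + 1), (lam ^ (-(k : ℤ) - 1)) • T ^ k‖ ≤ C :=
      ⟨max C₀ 0, le_max_right _ _, fun n lam h => (hC₀ n lam h).trans (le_max_left _ _)⟩
    refine ⟨2 * Real.exp 1 * C * 2 ^ r, fun n hn μ hμ => ?_⟩
    have hn0 : (0 : ℝ) < n := by exact_mod_cast hn
    have hn1 : (1 : ℝ) ≤ n := by exact_mod_cast hn
    have hμ0 : μ ≠ 0 := by rintro rfl; simp at hμ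
    obtain ⟨ρ, hρ⟩ : ∃ ρ : ℝ, ρ = 1 + 1 / (n : ℝ) := ⟨_, rfl⟩
    have hρ1 : 1 < ρ := by rw [hρ]; have : 0 < 1 / (n : ℝ) := by positivity
                           linarith
    have hρ0 : 0 < ρ := by linarith
    have hP : ∀ k : ℕ, ‖∑ j ∈ Finset.range (k + 1), ((ρ⁻¹ ^ j : ℝ) : ℂ) • (μ • T) ^ j‖
        ≤ C * ((n : ℝ) + 1) ^ (r + 1) := by
      intro k
      have hl : (ρ / μ : ℂ) * μ = ρ := by field_simp
      have h := hC k (ρ / μ) (by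
        rw [norm_div, hμ, Complex.norm_real, Real.norm_of_nonneg hρ0.le]; simpa using hρ1)
      rw [aux_key T r ρ hρ1 μ hμ _ hl k] at h
      have h1 : 1 - ρ⁻¹ = ((n : ℝ) + 1)⁻¹ := by
        rw [hρ]; field_simp; ring
      rw [h1, Real.inv_rpow (by positivity), inv_mul_le_iff₀ (by positivity)] at h
      linarith
    have hab := aux_abel_norm (fun j => ((ρ⁻¹ ^ j : ℝ) : ℂ) • (μ • T) ^ j) (fun k => ρ ^ k) n
    have hsimp : ∀ j, ((ρ ^ j : ℝ) : ℂ) • ((ρ⁻¹ ^ j : ℝ) : ℂ) • (μ • T) ^ j = (μ • T) ^ j := by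
      intro j
      rw [smul_smul, ← Complex.ofReal_mul, ← mul_pow, mul_inv_cancel₀ hρ0.ne']
      simp
    simp only [hsimp] at hab
    set D := C * ((n : ℝ) + 1) ^ (r + 1) with hD
    have hD0 : 0 ≤ D := by positivity
    have hS : ‖∑ j ∈ Finset.range (n + 1), (μ • T) ^ j‖ ≤ 2 * Real.exp 1 * D := by
      have hexp : ρ ^ n ≤ Real.exp 1 := by
        have : ρ ≤ Real.exp (1 / n) := by
          have := Real.add_one_le_exp (1 / (n : ℝ)); linarith
        calc ρ ^ n ≤ Real.exp (1 / n) ^ n := pow_le_pow_left₀ hρ0.le this n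
          _ = Real.exp (n * (1 / n)) := (Real.exp_nat_mul _ _).symm
          _ = Real.exp 1 := by congr 1; field_simp
      calc _ ≤ _ := hab
        _ ≤ ρ ^ n * D + ∑ k ∈ Finset.range n, (ρ ^ (k + 1) - ρ ^ k) * D := by
          refine add_le_add ?_ (Finset.sum_le_sum fun k _ => ?_)
          · rw [abs_of_nonneg (by positivity)]
            exact mul_le_mul_of_nonneg_left (hP n) (by positivity)
          · have hd : 0 ≤ ρ ^ (k + 1) - ρ ^ k :=
              sub_nonneg.2 (pow_le_pow_right₀ hρ1.le (Nat.le_succ k))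
            rw [abs_sub_comm, abs_of_nonneg hd]
            exact mul_le_mul_of_nonneg_left (hP k) hd
        _ = (2 * ρ ^ n - 1) * D := by
          rw [← Finset.sum_mul, Finset.sum_range_sub]; ring
        _ ≤ 2 * Real.exp 1 * D := by gcongr; linarith
    rw [aux_ces, hD, Real.rpow_add_one (by positivity)] at hS
    have hM : ‖cesaroMean1 (μ • T) n‖ ≤ 2 * Real.exp 1 * C * ((n : ℝ) + 1) ^ r := by
      have hpos : (0 : ℝ) < (n : ℝ) + 1 := by positivity
      refine le_of_mul_le_mul_left (hS.trans_eq ?_) hpos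
      ring
    have h2 : ((n : ℝ) + 1) ^ r ≤ 2 ^ r * (n : ℝ) ^ r := by
      rw [← Real.mul_rpow (by norm_num) hn0.le]
      exact Real.rpow_le_rpow (by positivity) (by linarith) hr
    have hp : (0 : ℝ) < (n : ℝ) ^ r := by positivity
    rw [Real.rpow_neg hn0.le, inv_mul_le_iff₀ hp]
    calc _ ≤ _ := hM
      _ ≤ 2 * Real.exp 1 * C * (2 ^ r * (n : ℝ) ^ r) := by gcongr
      _ = _ := by ring
end
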